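/- Let L be an orthomodular lattice and B a quasipoint of L. Then B is atomic (i.e. there exists a ∈ L such that B is the only quasipoint of L containing a) if and only if there exists an atom a₀ of L such that B = {a ∈ L : a₀ ≤ a}; moreover such an atom a₀ is unique. Conversely, for every atom a₀ of L, the set {a ∈ L : a₀ ≤ a} is a quasipoint of L. -/

import Mathlib

/-- A filter base in an ordered set `L` with least element `⊥`:
a nonempty subset not containing `⊥` in which any two elements have a common lower bound. -/
def IsFilterBase {L : Type*} [PartialOrder L] [OrderBot L] (B : Set L) : Prop :=
  B.Nonempty ∧ ⊥ ∉ B ∧ ∀ a ∈ B, ∀ b ∈ B, ∃ c ∈ B, c ≤ a ∧ c ≤ b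

/-- A quasipoint is a maximal filter base. -/
def IsQuasipoint {L : Type*} [PartialOrder L] [OrderBot L] (B : Set L) : Prop :=
  IsFilterBase B ∧ ∀ C : Set L, IsFilterBase C → B ⊆ C → C = B

/-- The set of quasipoints of `L`. -/
def Quasipoint (L : Type*) [PartialOrder L] [OrderBot L] : Type _ :=
  {B : Set L // IsQuasipoint B}

/-- The basic (cl)open set of the Stone spectrum determined by `a : L`. -/
def Qset {L : Type*} [PartialOrder L] [OrderBot L] (a : L) : Set (Quasipoint L) :=
  {B | a ∈ B.1}

/-- The Stone topology on the set of quasipoints, generated by the sets `Qset a`. -/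
instance {L : Type*} [PartialOrder L] [OrderBot L] : TopologicalSpace (Quasipoint L) :=
  TopologicalSpace.generateFrom (Set.range (Qset : L → Set (Quasipoint L)))

theorem qp_up {L : Type*} [PartialOrder L] [OrderBot L] {B : Set L} (hB : IsQuasipoint B)
    {a b : L} (ha : a ∈ B) (hab : a ≤ b) : b ∈ B := by
  obtain ⟨⟨hn, h0, hd⟩, hm⟩ := hB
  have := hm {x | ∃ y ∈ B, y ≤ x} ?_ (fun x hx => ⟨x, hx, le_rfl⟩)
  · rw [← this]; exact ⟨a, ha, hab⟩
  · refine ⟨⟨b, a, ha, hab⟩, ?_, ?_⟩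
    · rintro ⟨y, hy, hy0⟩
      exact h0 (le_bot_iff.mp hy0 ▸ hy)
    · rintro x ⟨x', hx', hx⟩ y ⟨y', hy', hy⟩
      obtain ⟨c, hc, h1, h2⟩ := hd x' hx' y' hy'
      exact ⟨c, ⟨c, hc, le_rfl⟩, h1.trans hx, h2.trans hy⟩

theorem fb_Ici {L : Type*} [PartialOrder L] [OrderBot L] {a : L} (ha : a ≠ ⊥) :
    IsFilterBase {x : L | a ≤ x} :=
  ⟨⟨a, le_rfl⟩, fun h => ha (le_bot_iff.mp h), fun _ hx _ hy => ⟨a, le_rfl, hx, hy⟩⟩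

theorem qp_exists {L : Type*} [PartialOrder L] [OrderBot L] {a : L} (ha : a ≠ ⊥) :
    ∃ B : Set L, IsQuasipoint B ∧ a ∈ B := by
  obtain ⟨M, hM, hmax⟩ := zorn_subset_nonempty {B : Set L | IsFilterBase B} (by
    intro c hc hch hne
    refine ⟨⋃₀ c, ⟨?_, ?_, ?_⟩, fun s hs => Set.subset_sUnion_of_mem hs⟩
    · obtain ⟨s, hs⟩ := hne
      obtain ⟨x, hx⟩ := (hc hs).1
      exact ⟨x, s, hs, hx⟩
    · rintro ⟨s, hs, h⟩
      exact (hc hs).2.1 h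
    · rintro x ⟨s, hs, hx⟩ y ⟨t, ht, hy⟩
      rcases hch.total hs ht with h | h
      · obtain ⟨z, hz, h'⟩ := (hc ht).2.2 x (h hx) y hy
        exact ⟨z, ⟨t, ht, hz⟩, h'⟩
      · obtain ⟨z, hz, h'⟩ := (hc hs).2.2 x hx y (h hy)
        exact ⟨z, ⟨s, hs, hz⟩, h'⟩) _ (fb_Ici ha)
  exact ⟨M, ⟨hmax.prop, fun C hC h => (hmax.eq_of_subset hC h).symm⟩, hM le_rfl⟩

theorem qp_atom {L : Type*} [PartialOrder L] [OrderBot L] {a : L} (ha : IsAtom a) :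
    IsQuasipoint {x : L | a ≤ x} := by
  refine ⟨fb_Ici ha.1, fun C hC h => Set.Subset.antisymm (fun x hx => ?_) h⟩
  obtain ⟨c, hc, h1, h2⟩ := hC.2.2 x hx a (h le_rfl)
  rcases ha.le_iff.mp h2 with rfl | rfl
  · exact (hC.2.1 hc).elim
  · exact h1

/-- In an orthomodular lattice `L`, a quasipoint `B` is atomic (there is an `a ∈ L` such that
`B` is the only quasipoint containing `a`) iff there is a (necessarily unique) atom `a₀` of `L`
with `B = {a | a₀ ≤ a}`; and conversely, for every atom `a₀` the set `{a | a₀ ≤ a}`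
is a quasipoint. -/
theorem atomic_quasipoint_iff_atom {L : Type*} [Lattice L] [BoundedOrder L]
    (oc : L → L)
    (h_inf_compl : ∀ a : L, a ⊓ oc a = ⊥)
    (h_sup_compl : ∀ a : L, a ⊔ oc a = ⊤)
    (h_compl_inf : ∀ a b : L, oc (a ⊓ b) = oc a ⊔ oc b)
    (h_compl_sup : ∀ a b : L, oc (a ⊔ b) = oc a ⊓ oc b)
    (h_compl_compl : ∀ a : L, oc (oc a) = a)
    (h_orthomodular : ∀ a b : L, b ≤ a → b = a ⊓ (oc a ⊔ b)) :
    (∀ B : Quasipoint L,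
      (∃ a : L, {C : Quasipoint L | a ∈ C.1} = {B}) ↔
        ∃! a₀ : L, IsAtom a₀ ∧ B.1 = {a : L | a₀ ≤ a}) ∧
    (∀ a₀ : L, IsAtom a₀ → IsQuasipoint {a : L | a₀ ≤ a}) := by
  refine ⟨fun B => ⟨?_, ?_⟩, fun a ha => qp_atom ha⟩
  · rintro ⟨a, ha⟩
    have haB : a ∈ B.1 := by
      have : B ∈ {C : Quasipoint L | a ∈ C.1} := by rw [ha]; rfl
      exact this
    have key : ∀ b, b ≠ ⊥ → b ≤ a → b ∈ B.1 := by
      intro b hb hba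
      obtain ⟨C, hC, hbC⟩ := qp_exists hb
      have : (⟨C, hC⟩ : Quasipoint L) ∈ {C : Quasipoint L | a ∈ C.1} := qp_up hC hbC hba
      rw [ha] at this
      have h2 : (⟨C, hC⟩ : Quasipoint L) = B := this
      rw [← h2]; exact hbC
    have h0 : ⊥ ∉ B.1 := B.2.1.2.1
    have atom : IsAtom a := by
      refine ⟨fun h => h0 (h ▸ haB), fun b hb => ?_⟩
      by_contra hb0
      have hne : a ⊓ oc b ≠ ⊥ := by
        intro h
        have hle : oc a ≤ oc b := by
          have := h_compl_sup a b
          rw [sup_eq_left.mpr hb.le] at this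
          rw [this]; exact inf_le_right
        have h1 := h_orthomodular _ _ hle
        rw [h_compl_compl, ← h_compl_compl b, h_compl_compl (oc b), ← h_compl_inf,
          inf_comm (oc b) a, h, ← h_compl_sup] at h1
        have h2 := congrArg oc h1
        rw [h_compl_compl, h_compl_compl, sup_bot_eq] at h2
        exact hb.ne h2.symm
      obtain ⟨d, hd, h1, h2⟩ := B.2.1.2.2 _ (key b hb0 hb.le) _ (key _ hne inf_le_left)
      have : d ≤ b ⊓ oc b := le_inf h1 (h2.trans inf_le_right)
      rw [h_inf_compl] at this
      exact h0 (le_bot_iff.mp this ▸ hd)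
    have hBa : B.1 = {x : L | a ≤ x} :=
      (qp_atom atom).2 _ B.2.1 (fun x hx => qp_up B.2 haB hx)
    refine ⟨a, ⟨atom, hBa⟩, ?_⟩
    rintro b ⟨-, hb⟩
    rw [hBa] at hb
    have h1 : b ∈ {x : L | a ≤ x} := by rw [hb]; exact le_refl b
    have h2 : a ∈ {x : L | b ≤ x} := by rw [← hb]; exact le_refl a
    exact le_antisymm h2 h1
  · rintro ⟨a, ⟨atom, hBa⟩, -⟩
    refine ⟨a, ?_⟩
    ext C
    constructor
    · intro hC
      have := (qp_atom atom).2 _ C.2.1 (fun x hx => qp_up C.2 hC hx)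
      exact Subtype.ext (this.trans hBa.symm)
    · intro h
      have h : C = B := h
      subst h
      change a ∈ C.1
      rw [hBa]; exact le_refl a
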